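/- Let T be a finite tree rooted at R and let S ⊆ V(T) with R ∈ S. Suppose that every vertex of S lies at even distance from R if and only if it belongs to a set S_A ⊆ S, and let S_B = S \ S_A. If additionally S contains, for each component C of T − S, all vertices of C adjacent in T to vertices of S at the 'wrong parity' side, then one may enlarge S to a set S' with |S'| ≤ 3|S| such that no component of T − S' has edges to both S'_A and S'_B, where S'_A (resp. S'_B) are the vertices of S' at even (resp. odd) distance from R. -/

import Mathlib

open SimpleGraph
open scoped Classical

/-!
Label every vertex with the distance parity of its nearest ancestor in `S`, itself included. The
labels of a child and its parent can only differ if the child is a seed; call such a seed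
conflicted, and add its parent to `S`. Parities alternate along edges and there are only two of
them, so the label of an added parent is its own parity. Hence on the enlarged set `S'` the label is
the parity, while along every edge with an end outside `S'` the label is constant: all the
neighbours in `S'` of a component of `T - S'` have the same parity. Each seed adds at most one
vertex, so even `|S'| ≤ 2|S|`.
-/

section Component

variable {V α : Type*} {G : SimpleGraph V} {X : Set V} {f : V → α}

theorem eq_of_reachable_induce_compl (hf : ∀ ⦃u v⦄, G.Adj u v → u ∉ X → f u = f v)
    {v w : ↑Xᶜ} (h : (G.induce Xᶜ).Reachable v w) : f v = f w := by
  obtain ⟨p⟩ := h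
  induction p with
  | nil => rfl
  | @cons u _ _ huv _ ih => exact (hf huv u.2).trans ih

theorem eq_of_adj_connectedComponent_induce_compl
    (hf : ∀ ⦃u v⦄, G.Adj u v → u ∉ X → f u = f v)
    {c : (G.induce Xᶜ).ConnectedComponent} {v w : ↑Xᶜ} (hv : v ∈ c.supp) (hw : w ∈ c.supp)
    {a b : V} (hva : G.Adj v a) (hwb : G.Adj w b) : f a = f b :=
  calc
    f a = f v := (hf hva v.2).symm
    _ = f w := eq_of_reachable_induce_compl hf (ConnectedComponent.exact (hv.trans hw.symm))
    _ = f b := hf hwb w.2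

end Component

section Parent

variable {V : Type*} {G : SimpleGraph V} {R u v : V}

/-- The parent of `v` in the connected graph `G` rooted at `R`: the last vertex before `v` on a
chosen shortest walk from `R`. The root is its own parent. -/
noncomputable def parent (hG : G.Connected) (R v : V) : V :=
  (hG.exists_walk_length_eq_dist R v).choose.penultimate

theorem exists_walk_penultimate_eq_parent (hG : G.Connected) (R v : V) :
    ∃ p : G.Walk R v, p.length = G.dist R v ∧ p.penultimate = parent hG R v :=
  ⟨_, (hG.exists_walk_length_eq_dist R v).choose_spec, rfl⟩

theorem dist_parent_add_one (hG : G.Connected) (hv : v ≠ R) :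
    G.dist R (parent hG R v) + 1 = G.dist R v := by
  obtain ⟨p, hp, hparent⟩ := exists_walk_penultimate_eq_parent hG R v
  have hdrop : p.dropLast.length = G.dist R p.penultimate :=
    length_eq_dist_of_subwalk hp p.isSubwalk_rfl.dropLast
  rw [← hparent, ← hdrop, Walk.length_dropLast_add_one (Walk.not_nil_of_ne hv.symm), hp]

theorem even_dist_parent_iff (hG : G.Connected) (hv : v ≠ R) :
    Even (G.dist R (parent hG R v)) ↔ ¬ Even (G.dist R v) := by
  rw [← dist_parent_add_one hG hv, Nat.even_add_one, not_not]

theorem parent_eq_of_adj_of_dist_eq (hG : G.IsTree) (huv : G.Adj u v)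
    (hd : G.dist R v = G.dist R u + 1) : parent hG.connected R v = u := by
  obtain ⟨p, hp, hparent⟩ := exists_walk_penultimate_eq_parent hG.connected R v
  obtain ⟨q, hq⟩ := hG.connected.exists_walk_length_eq_dist R u
  have hqv : (q.concat huv).length = G.dist R v := by rw [Walk.length_concat, hq, hd]
  have hpq : p = q.concat huv := (hG.existsUnique_path R v).unique
    (p.isPath_of_length_eq_dist hp) (Walk.isPath_of_length_eq_dist _ hqv)
  rw [← hparent, hpq, Walk.penultimate_concat]

theorem parent_eq_or_parent_eq_of_adj (hG : G.IsTree) (R : V) (huv : G.Adj u v) :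
    (v ≠ R ∧ parent hG.connected R v = u) ∨ (u ≠ R ∧ parent hG.connected R u = v) := by
  rcases hG.dist_eq_dist_add_one_of_adj R huv with hu | hv
  · exact .inr ⟨by rintro rfl; simp at hu, parent_eq_of_adj_of_dist_eq hG huv.symm hu⟩
  · exact .inl ⟨by rintro rfl; simp at hv, parent_eq_of_adj_of_dist_eq hG huv hv⟩

end Parent

section NearestSeed

variable {V : Type*} {G : SimpleGraph V} {R v : V} {S : Set V}

/-- The first vertex of `S` met when climbing from `v` (included) to the root `R`, or `R` itself if
there is none. -/
noncomputable def nearestSeed (hG : G.Connected) (R : V) (S : Set V) (v : V) : V :=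
  if v ∈ S ∨ v = R then v else nearestSeed hG R S (parent hG R v)
termination_by G.dist R v
decreasing_by
  have hlt := dist_parent_add_one hG (v := v) (R := R) (by tauto)
  lia

theorem nearestSeed_of_mem (hG : G.Connected) (hv : v ∈ S) : nearestSeed hG R S v = v := by
  rw [nearestSeed, if_pos (.inl hv)]

theorem nearestSeed_parent (hG : G.Connected) (hv : v ∉ S) (hvR : v ≠ R) :
    nearestSeed hG R S (parent hG R v) = nearestSeed hG R S v := by
  rw [nearestSeed.eq_1 hG R S v, if_neg (by tauto)]

end NearestSeed

section Augmentation

variable {V : Type*} {G : SimpleGraph V} {R u v : V} {S : Finset V}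

/-- The label of `v`: whether its nearest seed lies at even distance from the root. -/
def HasEvenSeed (hG : G.Connected) (R : V) (S : Set V) (v : V) : Prop :=
  Even (G.dist R (nearestSeed hG R S v))

/-- The seeds whose parity differs from the label of their parent. -/
noncomputable def conflictedSeeds (hG : G.Connected) (R : V) (S : Finset V) : Finset V :=
  {s ∈ S | s ≠ R ∧ ¬ (HasEvenSeed hG R S (parent hG R s) ↔ Even (G.dist R s))}

/-- The enlarged seed set `S'`: the seeds together with the parents of the conflicted ones. -/
noncomputable def augmentedSeeds (hG : G.Connected) (R : V) (S : Finset V) : Finset V :=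
  S ∪ (conflictedSeeds hG R S).image (parent hG R)

theorem conflictedSeeds_subset (hG : G.Connected) (R : V) (S : Finset V) :
    conflictedSeeds hG R S ⊆ S :=
  Finset.filter_subset _ _

theorem subset_augmentedSeeds (hG : G.Connected) (R : V) (S : Finset V) :
    S ⊆ augmentedSeeds hG R S :=
  Finset.subset_union_left

theorem card_augmentedSeeds_le (hG : G.Connected) (R : V) (S : Finset V) :
    (augmentedSeeds hG R S).card ≤ 2 * S.card :=
  calc
    (augmentedSeeds hG R S).card
      ≤ S.card + ((conflictedSeeds hG R S).image (parent hG R)).card := Finset.card_union_le _ _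
    _ ≤ S.card + (conflictedSeeds hG R S).card := by grw [Finset.card_image_le]
    _ ≤ S.card + S.card := by grw [conflictedSeeds_subset hG R S]
    _ = 2 * S.card := (two_mul _).symm

theorem hasEvenSeed_iff_of_mem (hG : G.Connected) (hv : v ∈ S) :
    HasEvenSeed hG R S v ↔ Even (G.dist R v) := by
  rw [HasEvenSeed, nearestSeed_of_mem hG (Finset.mem_coe.mpr hv)]

theorem hasEvenSeed_iff_of_mem_augmentedSeeds (hG : G.Connected)
    (hv : v ∈ augmentedSeeds hG R S) : HasEvenSeed hG R S v ↔ Even (G.dist R v) := by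
  rcases Finset.mem_union.mp hv with hvS | hvP
  · exact hasEvenSeed_iff_of_mem hG hvS
  · obtain ⟨s, hs, rfl⟩ := Finset.mem_image.mp hvP
    obtain ⟨-, hsR, hconflict⟩ := Finset.mem_filter.mp hs
    rw [even_dist_parent_iff hG hsR]
    exact (not_iff_comm.mp (not_iff.mp hconflict)).symm

theorem hasEvenSeed_parent_iff (hG : G.Connected) (hvR : v ≠ R)
    (hv : v ∉ conflictedSeeds hG R S) :
    HasEvenSeed hG R S (parent hG R v) ↔ HasEvenSeed hG R S v := by
  by_cases hvS : v ∈ S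
  · rw [hasEvenSeed_iff_of_mem hG hvS]
    by_contra hconflict
    exact hv (Finset.mem_filter.mpr ⟨hvS, hvR, hconflict⟩)
  · rw [HasEvenSeed, nearestSeed_parent hG (Finset.mem_coe.not.mpr hvS) hvR, HasEvenSeed]

theorem hasEvenSeed_iff_of_adj_of_notMem (hG : G.IsTree) (huv : G.Adj u v)
    (hu : u ∉ augmentedSeeds hG.connected R S) :
    HasEvenSeed hG.connected R S u ↔ HasEvenSeed hG.connected R S v := by
  rcases parent_eq_or_parent_eq_of_adj hG R huv with ⟨hvR, rfl⟩ | ⟨huR, rfl⟩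
  · have hv : v ∉ conflictedSeeds hG.connected R S := fun hv ↦
      hu (Finset.mem_union_right _ (Finset.mem_image_of_mem _ hv))
    exact hasEvenSeed_parent_iff hG.connected hvR hv
  · have hu' : u ∉ conflictedSeeds hG.connected R S := fun hu' ↦
      hu (subset_augmentedSeeds _ _ _ (conflictedSeeds_subset _ _ _ hu'))
    exact (hasEvenSeed_parent_iff hG.connected huR hu').symm

end Augmentation

theorem stmt_7_general {V : Type*} (G : SimpleGraph V) (hG : G.IsTree) (R : V) (S : Finset V) :
    ∃ S' : Finset V, S ⊆ S' ∧ S'.card ≤ 2 * S.card ∧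
      ∀ c : (G.induce (↑S' : Set V)ᶜ).ConnectedComponent,
        ¬ ((∃ v ∈ c.supp, ∃ a ∈ S', Even (G.dist R a) ∧ G.Adj ↑v a) ∧
           (∃ v ∈ c.supp, ∃ b ∈ S', Odd (G.dist R b) ∧ G.Adj ↑v b)) := by
  refine ⟨augmentedSeeds hG.connected R S, subset_augmentedSeeds _ _ _,
    card_augmentedSeeds_le _ _ _, ?_⟩
  rintro c ⟨⟨v, hv, a, ha, ha_even, hva⟩, ⟨w, hw, b, hb, hb_odd, hwb⟩⟩
  have hlabel : HasEvenSeed hG.connected R S a = HasEvenSeed hG.connected R S b :=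
    eq_of_adj_connectedComponent_induce_compl
      (fun _ _ huv hu ↦ propext (hasEvenSeed_iff_of_adj_of_notMem hG huv hu)) hv hw hva hwb
  have hparity : Even (G.dist R a) ↔ Even (G.dist R b) := by
    rw [← hasEvenSeed_iff_of_mem_augmentedSeeds hG.connected ha, hlabel,
      hasEvenSeed_iff_of_mem_augmentedSeeds hG.connected hb]
  exact Nat.not_even_iff_odd.mpr hb_odd (hparity.mp ha_even)

theorem stmt_7 {V : Type*} [Fintype V] (G : SimpleGraph V)
    (hG : G.IsTree) (R : V)
    (S S_A S_B : Finset V) (hR : R ∈ S)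
    (hSA : S_A ⊆ S)
    (hpar : ∀ s ∈ S, (Even (G.dist R s) ↔ s ∈ S_A))
    (hSB : S_B = S \ S_A) :
    ∃ S' : Finset V, S ⊆ S' ∧ S'.card ≤ 3 * S.card ∧
      ∀ c : (G.induce (↑S' : Set V)ᶜ).ConnectedComponent,
        ¬ ((∃ v ∈ c.supp, ∃ a ∈ S', Even (G.dist R a) ∧ G.Adj ↑v a) ∧
           (∃ v ∈ c.supp, ∃ b ∈ S', Odd (G.dist R b) ∧ G.Adj ↑v b)) := by
  obtain ⟨S', hsub, hcard, hsep⟩ := stmt_7_general G hG R S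
  exact ⟨S', hsub, by lia, hsep⟩
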